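/- Let n ≥ 2, fix j ∈ Fin n, and let P be a partition of Fin n \ {j} (a family of pairwise disjoint nonempty blocks whose union is Fin n \ {j}). Let H be the subgroup of Aut(F_n) generated by all inner automorphisms together with the Whitehead generators α_{B,j} for the blocks B ∈ P. Then for a finite set I ⊆ Fin n with j ∉ I, the Whitehead generator α_{I,j} lies in H if and only if I is a union of blocks of P (equivalently, every block B ∈ P satisfies B ⊆ I or B ∩ I = ∅). -/

import Mathlib

/-- The Whitehead generator `α_{I,j} ∈ Aut(F_n)`: the automorphism of the free group
`FreeGroup (Fin n)` determined on the basis by `x i ↦ x j⁻¹ * x i * x j` for `i ∈ I`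
and `x i ↦ x i` for `i ∉ I`. -/
def whitehead (n : ℕ) (I : Finset (Fin n)) (j : Fin n) : MulAut (FreeGroup (Fin n)) :=
  MonoidHom.toMulEquiv
    (FreeGroup.lift (fun i : Fin n =>
      if i ∈ I then (FreeGroup.of j)⁻¹ * FreeGroup.of i * FreeGroup.of j
      else FreeGroup.of i))
    (FreeGroup.lift (fun i : Fin n =>
      if i ∈ I then FreeGroup.of j * FreeGroup.of i * (FreeGroup.of j)⁻¹
      else FreeGroup.of i))
    (by
      apply FreeGroup.ext_hom
      intro i
      by_cases hi : i ∈ I <;> by_cases hj : j ∈ I <;>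
        simp [hi, hj, FreeGroup.lift_apply_of] <;> group)
    (by
      apply FreeGroup.ext_hom
      intro i
      by_cases hi : i ∈ I <;> by_cases hj : j ∈ I <;>
        simp [hi, hj, FreeGroup.lift_apply_of] <;> group)

theorem wh_of (n : ℕ) (I : Finset (Fin n)) (j i : Fin n) :
    whitehead n I j (FreeGroup.of i) =
      if i ∈ I then (FreeGroup.of j)⁻¹ * FreeGroup.of i * FreeGroup.of j
      else FreeGroup.of i := by
  simp [whitehead]

theorem mulAut_ext {n : ℕ} (f g : MulAut (FreeGroup (Fin n)))
    (h : ∀ i, f (FreeGroup.of i) = g (FreeGroup.of i)) : f = g := by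
  have : f.toMonoidHom = g.toMonoidHom := FreeGroup.ext_hom _ _ h
  ext x
  exact DFunLike.congr_fun this x

theorem wh_empty (n : ℕ) (j : Fin n) : whitehead n ∅ j = 1 := by
  apply mulAut_ext
  intro i
  simp [wh_of]

theorem wh_union (n : ℕ) (A B : Finset (Fin n)) (j : Fin n) (hA : j ∉ A)
    (hd : Disjoint A B) : whitehead n (A ∪ B) j = whitehead n A j * whitehead n B j := by
  apply mulAut_ext
  intro i
  rw [MulAut.mul_apply, wh_of, wh_of]
  by_cases h1 : i ∈ A
  · have h2 : i ∉ B := Finset.disjoint_left.mp hd h1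
    simp [h1, h2, wh_of]
  · by_cases h2 : i ∈ B <;> simp [h1, h2, wh_of, hA]

theorem s3_fact : ∀ w : Equiv.Perm (Fin 3),
    w * Equiv.swap 0 1 * w⁻¹ = (Equiv.swap 1 2)⁻¹ * Equiv.swap 0 1 * Equiv.swap 1 2 →
    w * Equiv.swap 0 1 * w⁻¹ = Equiv.swap 0 1 → False := by
  decide

/-- Let `n ≥ 2`, `j : Fin n`, and let `P` be a partition of
`Fin n \ {j}` into pairwise disjoint nonempty blocks. Let `H` be the subgroup of
`Aut(F_n)` generated by all inner automorphisms together with the Whitehead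
generators `α_{B,j}` for `B ∈ P`. Then for `j ∉ I`, `α_{I,j} ∈ H` if and only if
every block `B ∈ P` satisfies `B ⊆ I` or `B ∩ I = ∅`. -/
theorem whitehead_mem_iff_union_of_blocks (n : ℕ) (hn : 2 ≤ n) (j : Fin n)
    (P : Finset (Finset (Fin n)))
    (hne : ∀ B ∈ P, B.Nonempty)
    (hdisj : ∀ B ∈ P, ∀ B' ∈ P, B ≠ B' → Disjoint B B')
    (hcover : P.biUnion (fun B => B) = Finset.univ \ {j})
    (I : Finset (Fin n)) (hjI : j ∉ I) :
    whitehead n I j ∈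
        Subgroup.closure
          (Set.range (MulAut.conj : FreeGroup (Fin n) →* MulAut (FreeGroup (Fin n)))
            ∪ {φ | ∃ B ∈ P, φ = whitehead n B j})
      ↔ ∀ B ∈ P, B ⊆ I ∨ B ∩ I = ∅ := by
  constructor
  · intro hmem B hB
    by_contra hcon
    push Not at hcon
    obtain ⟨h1, h2⟩ := hcon
    obtain ⟨i', hi'B, hi'I⟩ := Finset.not_subset.mp h1
    obtain ⟨i, hi⟩ := h2
    obtain ⟨hiB, hiI⟩ := Finset.mem_inter.mp hi
    have hjP : ∀ C ∈ P, j ∉ C := by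
      intro C hC hj
      have : j ∈ P.biUnion (fun B => B) := Finset.mem_biUnion.mpr ⟨C, hC, hj⟩
      rw [hcover] at this
      simp at this
    have key : ∀ φ ∈ Subgroup.closure
          (Set.range (MulAut.conj : FreeGroup (Fin n) →* MulAut (FreeGroup (Fin n)))
            ∪ {φ | ∃ B ∈ P, φ = whitehead n B j}),
        ∃ w : FreeGroup (Fin n), ∀ k, (k = i ∨ k = i' ∨ k = j) →
          φ (FreeGroup.of k) = w * FreeGroup.of k * w⁻¹ := by
      intro φ hφ
      induction hφ using Subgroup.closure_induction with
      | mem x hx =>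
        rcases hx with ⟨g, rfl⟩ | ⟨C, hC, rfl⟩
        · exact ⟨g, fun k _ => by simp⟩
        · have hjC := hjP C hC
          by_cases hCB : C = B
          · subst hCB
            refine ⟨(FreeGroup.of j)⁻¹, ?_⟩
            rintro k (rfl | rfl | rfl) <;> simp [wh_of, *]
          · have hd := hdisj C hC B hB hCB
            have a1 : i ∉ C := fun h => Finset.disjoint_left.mp hd h hiB
            have a2 : i' ∉ C := fun h => Finset.disjoint_left.mp hd h hi'B
            refine ⟨1, ?_⟩
            rintro k (rfl | rfl | rfl) <;> simp [wh_of, *]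
      | one => exact ⟨1, fun k _ => by simp⟩
      | mul f g _ _ hf hg =>
        obtain ⟨v, hv⟩ := hf
        obtain ⟨w, hw⟩ := hg
        refine ⟨f w * v, fun k hk => ?_⟩
        rw [MulAut.mul_apply, hw k hk, map_mul, map_mul, hv k hk, map_inv]
        group
      | inv f _ hf =>
        obtain ⟨v, hv⟩ := hf
        refine ⟨f⁻¹ v⁻¹, fun k hk => ?_⟩
        apply f.injective
        simp [hv k hk, mul_assoc]
    obtain ⟨w, hw⟩ := key _ hmem
    have e1 := hw i (by simp)
    have e2 := hw i' (by simp)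
    have e3 := hw j (by simp)
    rw [wh_of] at e1 e2 e3
    simp only [hiI, hi'I, hjI, if_true, if_false] at e1 e2 e3
    have hij : i ≠ j := fun h => hjP B hB (h ▸ hiB)
    have hi'j : i' ≠ j := fun h => hjP B hB (h ▸ hi'B)
    let F : FreeGroup (Fin n) →* Equiv.Perm (Fin 3) :=
      FreeGroup.lift (fun k => if k = j then Equiv.swap 1 2 else Equiv.swap 0 1)
    have f1 := congrArg F e1
    have f2 := congrArg F e2
    simp only [F, map_mul, map_inv, FreeGroup.lift_apply_of, hij, hi'j, if_true, if_false] at f1 f2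
    exact s3_fact _ f1.symm f2.symm
  · intro h
    have hI : (P.filter (fun B => B ⊆ I)).biUnion (fun B => B) = I := by
      ext i
      simp only [Finset.mem_biUnion, Finset.mem_filter]
      constructor
      · rintro ⟨B, ⟨_, hs⟩, hi⟩
        exact hs hi
      · intro hi
        have : i ∈ P.biUnion (fun B => B) := by
          rw [hcover]
          simp only [Finset.mem_sdiff, Finset.mem_univ, Finset.mem_singleton, true_and]
          rintro rfl
          exact hjI hi
        obtain ⟨B, hB, hiB⟩ := Finset.mem_biUnion.mp this
        refine ⟨B, ⟨hB, ?_⟩, hiB⟩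
        rcases h B hB with h1 | h1
        · exact h1
        · have : i ∈ B ∩ I := Finset.mem_inter.mpr ⟨hiB, hi⟩
          simp [h1] at this
    have gen : ∀ Q : Finset (Finset (Fin n)), Q ⊆ P →
        whitehead n (Q.biUnion (fun B => B)) j ∈ Subgroup.closure
          (Set.range (MulAut.conj : FreeGroup (Fin n) →* MulAut (FreeGroup (Fin n)))
            ∪ {φ | ∃ B ∈ P, φ = whitehead n B j}) := by
      intro Q
      induction Q using Finset.induction_on with
      | empty =>
        intro _
        rw [Finset.biUnion_empty, wh_empty]
        exact Subgroup.one_mem _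
      | insert B Q hBQ ih =>
        intro hQ
        have hB : B ∈ P := hQ (Finset.mem_insert_self _ _)
        have hQ' : Q ⊆ P := fun x hx => hQ (Finset.mem_insert_of_mem hx)
        rw [Finset.biUnion_insert, wh_union]
        · exact Subgroup.mul_mem _ (Subgroup.subset_closure (Or.inr ⟨B, hB, rfl⟩)) (ih hQ')
        · intro hj
          have : j ∈ P.biUnion (fun B => B) := Finset.mem_biUnion.mpr ⟨B, hB, hj⟩
          rw [hcover] at this
          simp at this
        · rw [Finset.disjoint_biUnion_right]
          intro C hC
          exact hdisj B hB C (hQ' hC) (fun e => hBQ (e ▸ hC))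
    have := gen _ (Finset.filter_subset (fun B => B ⊆ I) P)
    rwa [hI] at this
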